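/- Let (Q,·,e) be a torsion loop in which squaring is a centralizing endomorphism: x·x ∈ Z(Q) for all x, the map s(x) = x·x is an endomorphism of (Q,·), and every element has finite order (powers defined by x^n = L_x^n(e), which is unambiguous since Q is power-associative). Let E = {a ∈ Q : a^{2^n} = e for some n ≥ 0} and O = {a ∈ Q : a has finite odd order}. Then E and O are normal subloops of Q, E ∩ O = {e}, Q = E·O, and the map E × O → Q, (b,c) ↦ b·c, is an isomorphism of loops from the direct product E × O onto Q. -/

import Mathlib

/-- A loop `(Q, ·, e)`: a quasigroup with two-sided identity, presented with
explicit left division `ldiv a b = a \ b` and right division `rdiv b a = b / a`. -/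
structure LoopStr (Q : Type*) where
  mul : Q → Q → Q
  e : Q
  ldiv : Q → Q → Q
  rdiv : Q → Q → Q
  one_mul : ∀ x, mul e x = x
  mul_one : ∀ x, mul x e = x
  mul_ldiv : ∀ a b, mul a (ldiv a b) = b
  ldiv_mul : ∀ a b, ldiv a (mul a b) = b
  rdiv_mul : ∀ a b, mul (rdiv b a) a = b
  mul_rdiv : ∀ a b, rdiv (mul b a) a = b

namespace LoopStr

variable {Q : Type*} (S : LoopStr Q)

/-- The left inverse `x^ℓ = e / x`. -/
def linv (x : Q) : Q := S.rdiv S.e x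

/-- The right inverse `x^r = x \ e`. -/
def rinv (x : Q) : Q := S.ldiv x S.e

/-- The left nucleus. -/
def lnuc : Set Q := {a | ∀ x y, S.mul (S.mul a x) y = S.mul a (S.mul x y)}

/-- The middle nucleus. -/
def mnuc : Set Q := {a | ∀ x y, S.mul (S.mul x a) y = S.mul x (S.mul a y)}

/-- The right nucleus. -/
def rnuc : Set Q := {a | ∀ x y, S.mul (S.mul x y) a = S.mul x (S.mul y a)}

/-- The commutant `C(Q)`. -/
def commutant : Set Q := {a | ∀ x, S.mul a x = S.mul x a}

/-- The center `Z(Q) = C(Q) ∩ Nuc_ℓ ∩ Nuc_m ∩ Nuc_r`. -/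
def center : Set Q := S.commutant ∩ S.lnuc ∩ S.mnuc ∩ S.rnuc

/-- The left translation `L_a` as a map. -/
def leftMul (a : Q) : Q → Q := fun x => S.mul a x

/-- The left translation `L_a` as a permutation of `Q`. -/
def leftPerm (a : Q) : Equiv.Perm Q :=
  ⟨fun x => S.mul a x, fun x => S.ldiv a x, S.ldiv_mul a, S.mul_ldiv a⟩

/-- The right translation `R_a` as a permutation of `Q`. -/
def rightPerm (a : Q) : Equiv.Perm Q :=
  ⟨fun x => S.mul x a, fun x => S.rdiv x a, fun x => S.mul_rdiv a x, fun x => S.rdiv_mul a x⟩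

/-- The multiplication group `Mlt(Q) = ⟨L_x, R_x : x ∈ Q⟩ ≤ Sym(Q)`. -/
def Mlt : Subgroup (Equiv.Perm Q) :=
  Subgroup.closure (Set.range S.leftPerm ∪ Set.range S.rightPerm)

/-- `x^n = L_x^n(e)` for natural `n`. -/
def npow (a : Q) (n : ℕ) : Q := (S.leftPerm a ^ n) S.e

/-- `x^n = L_x^n(e)` for integer `n`. -/
def zpow (a : Q) (n : ℤ) : Q := (S.leftPerm a ^ n) S.e

/-- The order of an element: the least `n > 0` with `x^n = e` (or `0` if none exists). -/
noncomputable def lorder (a : Q) : ℕ := sInf {n : ℕ | 0 < n ∧ S.npow a n = S.e}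

/-- A subloop: contains `e`, closed under multiplication and both divisions. -/
def IsSubloop (N : Set Q) : Prop :=
  S.e ∈ N ∧ (∀ a ∈ N, ∀ b ∈ N, S.mul a b ∈ N) ∧
    (∀ a ∈ N, ∀ b ∈ N, S.ldiv a b ∈ N) ∧ (∀ a ∈ N, ∀ b ∈ N, S.rdiv a b ∈ N)

/-- A normal subloop: a subloop with `xN = Nx`, `(xN)y = x(Ny)`, `N(xy) = (Nx)y`
elementwise as sets. -/
def IsNormalSubloop (N : Set Q) : Prop :=
  S.IsSubloop N ∧
  (∀ x : Q, (fun a => S.mul x a) '' N = (fun a => S.mul a x) '' N) ∧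
  (∀ x y : Q, (fun a => S.mul (S.mul x a) y) '' N = (fun a => S.mul x (S.mul a y)) '' N) ∧
  (∀ x y : Q, (fun a => S.mul a (S.mul x y)) '' N = (fun a => S.mul (S.mul a x) y) '' N)

/-- A loop is simple if its only normal subloops are `{e}` and `Q`. -/
def IsSimple : Prop :=
  ∀ N : Set Q, S.IsNormalSubloop N → N = {S.e} ∨ N = Set.univ

lemma mul_rinv (x : Q) : S.mul x (S.rinv x) = S.e := S.mul_ldiv x S.e

lemma linv_mul (x : Q) : S.mul (S.linv x) x = S.e := S.rdiv_mul x S.e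

lemma linv_rinv (x : Q) : S.linv (S.rinv x) = x := by
  have h := S.mul_rdiv (S.rinv x) x
  rw [S.mul_rinv] at h
  exact h

lemma rinv_linv (x : Q) : S.rinv (S.linv x) = x := by
  have h := S.ldiv_mul (S.linv x) x
  rw [S.linv_mul] at h
  exact h

lemma rinv_e : S.rinv S.e = S.e := by
  have h := S.ldiv_mul S.e S.e
  rw [S.one_mul] at h
  exact h

lemma rdiv_e (x : Q) : S.rdiv x S.e = x := by
  have h := S.mul_rdiv S.e x
  rw [S.mul_one] at h
  exact h

/-- The principal right isostrophe `(Q, ∘)` of `(Q, ·)`, with `x ∘ y = x / (y^r)`,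
right division `x // y = x·(y^r)` and left division `x \\ y = (y \ x)^ℓ`. -/
def iso : LoopStr Q where
  mul x y := S.rdiv x (S.rinv y)
  e := S.e
  ldiv x y := S.linv (S.ldiv y x)
  rdiv x y := S.mul x (S.rinv y)
  one_mul x := S.linv_rinv x
  mul_one x := by
    show S.rdiv x (S.rinv S.e) = x
    rw [S.rinv_e, S.rdiv_e]
  mul_ldiv a b := by
    show S.rdiv a (S.rinv (S.linv (S.ldiv b a))) = b
    rw [S.rinv_linv]
    have h := S.mul_rdiv (S.ldiv b a) b
    rw [S.mul_ldiv] at h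
    exact h
  ldiv_mul a b := by
    show S.linv (S.ldiv (S.rdiv a (S.rinv b)) a) = b
    have h := S.ldiv_mul (S.rdiv a (S.rinv b)) (S.rinv b)
    rw [S.rdiv_mul] at h
    rw [h, S.linv_rinv]
  rdiv_mul a b := by
    show S.rdiv (S.mul b (S.rinv a)) (S.rinv a) = b
    exact S.mul_rdiv (S.rinv a) b
  mul_rdiv a b := by
    show S.mul (S.rdiv b (S.rinv a)) (S.rinv a) = b
    exact S.rdiv_mul (S.rinv a) b

end LoopStr

namespace LoopStr

variable {Q : Type*} (S : LoopStr Q)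

/-- The squaring map. -/
def square (x : Q) : Q := S.mul x x

/-- A map preserving the loop multiplication. -/
def IsEndo (f : Q → Q) : Prop := ∀ x y, f (S.mul x y) = S.mul (f x) (f y)

variable {S}

lemma mul_left_cancel {a b c : Q} (h : S.mul a b = S.mul a c) : b = c := by
  rw [← S.ldiv_mul a b, h, S.ldiv_mul]

lemma mul_right_cancel {a b c : Q} (h : S.mul b a = S.mul c a) : b = c := by
  rw [← S.mul_rdiv a b, h, S.mul_rdiv]

lemma IsEndo.map_e {f : Q → Q} (hf : S.IsEndo f) : f S.e = S.e := by
  apply mul_left_cancel (S := S) (a := f S.e)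
  rw [← hf, S.mul_one, S.mul_one]

lemma IsEndo.map_ldiv {f : Q → Q} (hf : S.IsEndo f) (a b : Q) :
    f (S.ldiv a b) = S.ldiv (f a) (f b) := by
  apply mul_left_cancel (S := S) (a := f a)
  rw [← hf, S.mul_ldiv, S.mul_ldiv]

lemma IsEndo.map_rdiv {f : Q → Q} (hf : S.IsEndo f) (a b : Q) :
    f (S.rdiv a b) = S.rdiv (f a) (f b) := by
  apply mul_right_cancel (S := S) (a := f b)
  rw [← hf, S.rdiv_mul, S.rdiv_mul]

lemma IsEndo.iterate {f : Q → Q} (hf : S.IsEndo f) (n : ℕ) : S.IsEndo f^[n] := by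
  induction n with
  | zero => intro x y; rfl
  | succ n ih => intro x y; rw [Function.iterate_succ_apply, hf, ih]; rfl

lemma ldiv_self (a : Q) : S.ldiv a a = S.e :=
  mul_left_cancel (S := S) (a := a) (by rw [S.mul_ldiv, S.mul_one])

lemma rdiv_self (a : Q) : S.rdiv a a = S.e :=
  mul_right_cancel (S := S) (a := a) (by rw [S.rdiv_mul, S.one_mul])

/-- A subloop is normal if it is stable under the inner maps and their inverses. -/
lemma isNormalSubloop_of_forall {N : Set Q} (hN : S.IsSubloop N)
    (h₁ : ∀ x a b, S.mul x a = S.mul b x → (a ∈ N ↔ b ∈ N))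
    (h₂ : ∀ x y a b, S.mul (S.mul x a) y = S.mul x (S.mul b y) → (a ∈ N ↔ b ∈ N))
    (h₃ : ∀ x y a b, S.mul a (S.mul x y) = S.mul (S.mul b x) y → (a ∈ N ↔ b ∈ N)) :
    S.IsNormalSubloop N := by
  refine ⟨hN, fun x => ?_, fun x y => ?_, fun x y => ?_⟩
  · apply Set.Subset.antisymm
    · rintro _ ⟨a, ha, rfl⟩
      have h := S.rdiv_mul x (S.mul x a)
      exact ⟨_, (h₁ x a _ h.symm).1 ha, h⟩
    · rintro _ ⟨b, hb, rfl⟩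
      have h := S.mul_ldiv x (S.mul b x)
      exact ⟨_, (h₁ x _ b h).2 hb, h⟩
  · apply Set.Subset.antisymm
    · rintro _ ⟨a, ha, rfl⟩
      have h : S.mul x (S.mul (S.rdiv (S.ldiv x (S.mul (S.mul x a) y)) y) y) =
          S.mul (S.mul x a) y := by rw [S.rdiv_mul, S.mul_ldiv]
      exact ⟨_, (h₂ x y a _ h.symm).1 ha, h⟩
    · rintro _ ⟨b, hb, rfl⟩
      have h : S.mul (S.mul x (S.ldiv x (S.rdiv (S.mul x (S.mul b y)) y))) y =
          S.mul x (S.mul b y) := by rw [S.mul_ldiv, S.rdiv_mul]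
      exact ⟨_, (h₂ x y _ b h).2 hb, h⟩
  · apply Set.Subset.antisymm
    · rintro _ ⟨a, ha, rfl⟩
      have h : S.mul (S.mul (S.rdiv (S.rdiv (S.mul a (S.mul x y)) y) x) x) y =
          S.mul a (S.mul x y) := by rw [S.rdiv_mul, S.rdiv_mul]
      exact ⟨_, (h₃ x y a _ h.symm).1 ha, h⟩
    · rintro _ ⟨b, hb, rfl⟩
      have h := S.rdiv_mul (S.mul x y) (S.mul (S.mul b x) y)
      exact ⟨_, (h₃ x y _ b h).2 hb, h⟩

/-- A subloop contained in the center is normal. -/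
lemma isNormalSubloop_of_subset_center {N : Set Q} (hN : S.IsSubloop N)
    (hc : N ⊆ S.center) : S.IsNormalSubloop N := by
  refine ⟨hN, fun x => ?_, fun x y => ?_, fun x y => ?_⟩
  · exact Set.image_congr fun a ha => ((hc ha).1.1.1 x).symm
  · exact Set.image_congr fun a ha => (hc ha).1.2 x y
  · exact Set.image_congr fun a ha => ((hc ha).1.1.2 x y).symm

/-- The elements killed by some iterate of an endomorphism form a normal subloop. -/
lemma IsEndo.isNormalSubloop_iterate_eq_e {f : Q → Q} (hf : S.IsEndo f) :
    S.IsNormalSubloop {a | ∃ n, f^[n] a = S.e} := by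
  have stable {a : Q} {n m : ℕ} (hnm : n ≤ m) (h : f^[n] a = S.e) : f^[m] a = S.e := by
    obtain ⟨k, rfl⟩ := Nat.exists_eq_add_of_le' hnm
    rw [Function.iterate_add_apply, h, (hf.iterate k).map_e]
  have common {a b : Q} : (∃ n, f^[n] a = S.e) → (∃ n, f^[n] b = S.e) →
      ∃ n, f^[n] a = S.e ∧ f^[n] b = S.e := fun ⟨n, hn⟩ ⟨m, hm⟩ =>
    ⟨max n m, stable (le_max_left _ _) hn, stable (le_max_right _ _) hm⟩
  refine isNormalSubloop_of_forall ⟨⟨0, rfl⟩, ?_, ?_, ?_⟩ ?_ ?_ ?_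
  · intro a ha b hb
    obtain ⟨n, h₁, h₂⟩ := common ha hb
    exact ⟨n, by rw [hf.iterate n, h₁, h₂, S.one_mul]⟩
  · intro a ha b hb
    obtain ⟨n, h₁, h₂⟩ := common ha hb
    exact ⟨n, by rw [(hf.iterate n).map_ldiv, h₁, h₂, ldiv_self]⟩
  · intro a ha b hb
    obtain ⟨n, h₁, h₂⟩ := common ha hb
    exact ⟨n, by rw [(hf.iterate n).map_rdiv, h₁, h₂, rdiv_self]⟩
  all_goals
    intros
    rename_i h
    refine exists_congr fun n => ?_
    have h' := congrArg f^[n] h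
    simp only [hf.iterate n _ _] at h'
    constructor
    all_goals
      intro h₀
      simp only [h₀, S.one_mul, S.mul_one] at h'
  · exact mul_right_cancel (h'.symm.trans (S.one_mul _).symm)
  · exact mul_left_cancel (h'.trans (S.mul_one _).symm)
  · exact (mul_right_cancel (mul_left_cancel (h'.symm.trans
      (congrArg _ (S.one_mul _).symm))))
  · exact (mul_left_cancel (mul_right_cancel (h'.trans
      (congrArg (S.mul · _) (S.mul_one _).symm))))
  · exact (mul_right_cancel (mul_right_cancel (h'.symm.trans
      (congrArg (S.mul · _) (S.one_mul _).symm))))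
  · exact mul_right_cancel (h'.trans (S.one_mul _).symm)

/-- The periodic points of an endomorphism form a subloop. -/
lemma IsEndo.isSubloop_periodicPts {f : Q → Q} (hf : S.IsEndo f) :
    S.IsSubloop (Function.periodicPts f) := by
  have common {a b : Q} : a ∈ Function.periodicPts f → b ∈ Function.periodicPts f →
      ∃ n > 0, f^[n] a = a ∧ f^[n] b = b := fun ⟨n, hn, ha⟩ ⟨m, hm, hb⟩ =>
    ⟨n * m, Nat.mul_pos hn hm, ha.mul_const m, hb.const_mul n⟩
  refine ⟨⟨1, one_pos, hf.map_e⟩, ?_, ?_, ?_⟩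
  · intro a ha b hb
    obtain ⟨n, hn, h₁, h₂⟩ := common ha hb
    exact ⟨n, hn, by rw [Function.IsPeriodicPt, Function.IsFixedPt, hf.iterate n, h₁, h₂]⟩
  · intro a ha b hb
    obtain ⟨n, hn, h₁, h₂⟩ := common ha hb
    exact ⟨n, hn, by
      rw [Function.IsPeriodicPt, Function.IsFixedPt, (hf.iterate n).map_ldiv, h₁, h₂]⟩
  · intro a ha b hb
    obtain ⟨n, hn, h₁, h₂⟩ := common ha hb
    exact ⟨n, hn, by
      rw [Function.IsPeriodicPt, Function.IsFixedPt, (hf.iterate n).map_rdiv, h₁, h₂]⟩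

/-- A periodic point killed by some iterate is trivial. -/
lemma IsEndo.eq_e_of_mem_periodicPts {f : Q → Q} (hf : S.IsEndo f) {a : Q} {n : ℕ}
    (hn : f^[n] a = S.e) (ha : a ∈ Function.periodicPts f) : a = S.e := by
  obtain ⟨m, hm, h⟩ := ha
  have hp : f^[n * m] a = a := h.const_mul n
  obtain ⟨k, hk⟩ := Nat.exists_eq_add_of_le' (Nat.le_mul_of_pos_right n hm)
  rw [← hp, hk, Function.iterate_add_apply, hn, (hf.iterate k).map_e]

lemma npow_eq_iterate (a : Q) (n : ℕ) : S.npow a n = (S.mul a)^[n] S.e := by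
  rw [npow, ← Equiv.Perm.iterate_eq_pow]
  rfl

lemma npow_succ (a : Q) (n : ℕ) : S.npow a (n + 1) = S.mul a (S.npow a n) := by
  simp only [npow_eq_iterate, Function.iterate_succ_apply']

lemma npow_add_mul {a : Q} {d : ℕ} (h : S.npow a d = S.e) (n t : ℕ) :
    S.npow a (n + d * t) = S.npow a n := by
  rw [npow_eq_iterate] at h
  have hp : Function.IsPeriodicPt (S.mul a) d S.e := h
  rw [npow_eq_iterate, npow_eq_iterate, Function.iterate_add_apply, hp.mul_const t]

lemma npow_mem_rnuc {a : Q} (ha : a ∈ S.rnuc) (n : ℕ) : S.npow a n ∈ S.rnuc := by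
  induction n with
  | zero => intro x y; simp [npow, S.mul_one]
  | succ n ih =>
    intro x y
    rw [npow_succ, ← ih, ha, ih, ih]

lemma npow_two_mul {a : Q} (ha : S.square a ∈ S.rnuc) (n : ℕ) :
    S.npow a (2 * n) = S.npow (S.square a) n := by
  induction n with
  | zero => rfl
  | succ n ih =>
    rw [Nat.mul_succ, npow_succ, npow_succ, ih, npow_succ, ← npow_mem_rnuc ha n]
    rfl

lemma npow_two_pow (hZ : ∀ x, S.square x ∈ S.rnuc) (a : Q) (n : ℕ) :
    S.npow a (2 ^ n) = S.square^[n] a := by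
  induction n generalizing a with
  | zero => simp [npow_eq_iterate, S.mul_one]
  | succ n ih => rw [pow_succ', npow_two_mul (hZ a), ih, Function.iterate_succ_apply]

lemma lorder_eq_minimalPeriod {a : Q} (h : ∃ n, 0 < n ∧ S.npow a n = S.e) :
    S.lorder a = Function.minimalPeriod (S.mul a) S.e := by
  have hmem : 0 < S.lorder a ∧ S.npow a (S.lorder a) = S.e := Nat.sInf_mem h
  obtain ⟨n, hn, hp⟩ := h
  rw [npow_eq_iterate] at hp
  apply le_antisymm
  · refine Nat.sInf_le ⟨Function.IsPeriodicPt.minimalPeriod_pos hn hp, ?_⟩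
    rw [npow_eq_iterate]
    exact Function.iterate_minimalPeriod
  · have hq := hmem.2
    rw [npow_eq_iterate] at hq
    exact Function.IsPeriodicPt.minimalPeriod_le hmem.1 hq

lemma exists_two_pow_eq_one_add_mul {m : ℕ} (hm : Odd m) :
    ∃ N > 0, ∃ t, 2 ^ N = 1 + m * t := by
  have h := Nat.ModEq.pow_totient (Nat.coprime_two_left.2 hm)
  refine ⟨m.totient, Nat.totient_pos.2 hm.pos, ?_⟩
  obtain ⟨t, ht⟩ := (Nat.modEq_iff_dvd' Nat.one_le_two_pow).1 h.symm
  exact ⟨t, by have := Nat.one_le_two_pow (n := m.totient); omega⟩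

lemma exists_two_pow_add_self_eq {d : ℕ} (hd : 0 < d) :
    ∃ N > 0, ∃ t, 2 ^ (N + N) = 2 ^ N + d * t := by
  obtain ⟨k, m, hm, rfl⟩ := Nat.exists_eq_two_pow_mul_odd hd.ne'
  obtain ⟨N, hN, t, ht⟩ := exists_two_pow_eq_one_add_mul hm
  have hmod : 2 ^ (N * (k + 1)) ≡ 1 [MOD m] := by
    rw [pow_mul, ht]
    simpa using ((Nat.ModEq.refl 1).add
      ((Nat.modEq_zero_iff_dvd).2 (Dvd.intro t rfl))).pow (k + 1)
  obtain ⟨u, hu⟩ := (Nat.modEq_iff_dvd' Nat.one_le_two_pow).1 hmod.symm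
  have hu' : 2 ^ (N * (k + 1)) = 1 + m * u := by
    have := Nat.one_le_two_pow (n := N * (k + 1)); omega
  obtain ⟨j, hj⟩ := Nat.exists_eq_add_of_le (show k ≤ N * (k + 1) by nlinarith)
  refine ⟨N * (k + 1), by positivity, 2 ^ j * u, ?_⟩
  calc 2 ^ (N * (k + 1) + N * (k + 1)) = 2 ^ (N * (k + 1)) * (1 + m * u) := by
        rw [pow_add, hu']
    _ = 2 ^ (N * (k + 1)) + 2 ^ (N * (k + 1)) * (m * u) := by ring
    _ = 2 ^ (N * (k + 1)) + 2 ^ k * m * (2 ^ j * u) := by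
        congr 1
        rw [hj, pow_add]
        ring

/-- When squares lie in the right nucleus, the elements of odd order are the periodic points of
squaring. -/
lemma odd_lorder_iff (hZ : ∀ x, S.square x ∈ S.rnuc) {a : Q}
    (h : ∃ n, 0 < n ∧ S.npow a n = S.e) :
    Odd (S.lorder a) ↔ a ∈ Function.periodicPts S.square := by
  constructor
  · intro ho
    have hmem : 0 < S.lorder a ∧ S.npow a (S.lorder a) = S.e := Nat.sInf_mem h
    obtain ⟨N, hN, t, ht⟩ := exists_two_pow_eq_one_add_mul ho
    refine ⟨N, hN, ?_⟩
    rw [Function.IsPeriodicPt, Function.IsFixedPt, ← npow_two_pow hZ, ht,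
      npow_add_mul hmem.2, npow_eq_iterate]
    exact S.mul_one a
  · rintro ⟨n, hn, hp⟩
    rw [Function.IsPeriodicPt, Function.IsFixedPt, ← npow_two_pow hZ] at hp
    obtain ⟨k, hk⟩ : ∃ k, 2 ^ n = k + 1 :=
      ⟨2 ^ n - 1, by have := Nat.one_le_two_pow (n := n); omega⟩
    rw [hk, npow_succ] at hp
    have hk' := mul_left_cancel (hp.trans (S.mul_one a).symm)
    rw [npow_eq_iterate] at hk'
    have hodd : Odd k := by
      have : Even (2 ^ n) := (even_two).pow_of_ne_zero hn.ne'
      rw [hk] at this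
      grind
    rw [lorder_eq_minimalPeriod h]
    exact hodd.of_dvd_nat (Function.IsPeriodicPt.minimalPeriod_dvd hk')

end LoopStr

open LoopStr in
/-- Decomposition theorem. Let `Q` be a torsion loop in which squaring
is a centralizing endomorphism, `E = {a : a^{2^n} = e for some n}` and
`O = {a : a has finite odd order}`. Then `E` and `O` are normal subloops,
`E ∩ O = {e}`, `Q = E·O`, and `(b,c) ↦ b·c` is an isomorphism of loops from the
direct product `E × O` onto `Q`. -/
theorem torsion_decomposition {Q : Type*} (S : LoopStr Q)
    (hZ : ∀ x : Q, S.mul x x ∈ S.center)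
    (hEndo : ∀ x y : Q, S.mul (S.mul x y) (S.mul x y) = S.mul (S.mul x x) (S.mul y y))
    (hTor : ∀ x : Q, ∃ n : ℕ, 0 < n ∧ S.npow x n = S.e)
    (E O : Set Q)
    (hE : E = {a : Q | ∃ n : ℕ, S.npow a (2 ^ n) = S.e})
    (hO : O = {a : Q | Odd (S.lorder a)}) :
    S.IsNormalSubloop E ∧ S.IsNormalSubloop O ∧
    E ∩ O = {S.e} ∧
    (∀ q : Q, ∃ b ∈ E, ∃ c ∈ O, S.mul b c = q) ∧
    (∀ b₁ ∈ E, ∀ b₂ ∈ E, ∀ c₁ ∈ O, ∀ c₂ ∈ O,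
      S.mul (S.mul b₁ c₁) (S.mul b₂ c₂) = S.mul (S.mul b₁ b₂) (S.mul c₁ c₂)) ∧
    Function.Bijective (fun p : E × O => S.mul p.1.1 p.2.1) := by
  have hR (x : Q) : S.square x ∈ S.rnuc := (hZ x).2
  have hs : S.IsEndo S.square := hEndo
  replace hE : E = {a | ∃ n, S.square^[n] a = S.e} := by
    simp only [hE, npow_two_pow hR]
  replace hO : O = Function.periodicPts S.square := by
    ext a
    rw [hO]
    exact odd_lorder_iff hR (hTor a)
  subst hE hO
  have hcen : Function.periodicPts S.square ⊆ S.center := by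
    rintro a ⟨n, hn, h⟩
    obtain ⟨k, rfl⟩ := Nat.exists_eq_add_of_lt hn
    rw [zero_add, Function.IsPeriodicPt, Function.IsFixedPt,
      Function.iterate_succ_apply'] at h
    rw [← h]
    exact hZ _
  have hEn := hs.isNormalSubloop_iterate_eq_e
  have hOs := hs.isSubloop_periodicPts
  have hdecomp (q : Q) : ∃ b ∈ {a | ∃ n, S.square^[n] a = S.e},
      ∃ c ∈ Function.periodicPts S.square, S.mul b c = q := by
    obtain ⟨d, hd, hq⟩ := hTor q
    obtain ⟨N, hN, t, ht⟩ := exists_two_pow_add_self_eq hd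
    have hNN : S.square^[N] (S.square^[N] q) = S.square^[N] q := by
      rw [← Function.iterate_add_apply, ← npow_two_pow hR, ht, npow_add_mul hq,
        npow_two_pow hR]
    refine ⟨S.rdiv q (S.square^[N] q), ⟨N, ?_⟩, S.square^[N] q, ⟨N, hN, hNN⟩,
      S.rdiv_mul _ _⟩
    rw [(hs.iterate N).map_rdiv, hNN, rdiv_self]
  have hmul : ∀ b₁ b₂ : Q, ∀ c₁ ∈ Function.periodicPts S.square,
      ∀ c₂ ∈ Function.periodicPts S.square,
      S.mul (S.mul b₁ c₁) (S.mul b₂ c₂) = S.mul (S.mul b₁ b₂) (S.mul c₁ c₂) := by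
    intro b₁ b₂ c₁ h₁ c₂ h₂
    rw [(hcen h₁).1.2, ← (hcen h₁).1.1.2, (hcen h₁).1.1.1, (hcen h₁).1.2,
      (hcen (hOs.2.1 c₁ h₁ c₂ h₂)).2]
  refine ⟨hEn, isNormalSubloop_of_subset_center hOs hcen, ?_, hdecomp,
    fun b₁ _ b₂ _ => hmul b₁ b₂, ?_, ?_⟩
  · ext a
    constructor
    · rintro ⟨⟨n, hn⟩, ha⟩
      exact hs.eq_e_of_mem_periodicPts hn ha
    · rintro rfl
      exact ⟨hEn.1.1, hOs.1⟩
  · rintro ⟨⟨b₁, hb₁⟩, ⟨c₁, hc₁⟩⟩ ⟨⟨b₂, hb₂⟩, ⟨c₂, hc₂⟩⟩ h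
    change S.mul b₁ c₁ = S.mul b₂ c₂ at h
    have hb : b₁ = S.mul b₂ (S.rdiv c₂ c₁) := by
      apply mul_right_cancel (S := S) (a := c₁)
      rw [h, (hcen hc₁).2, S.rdiv_mul]
    have hd : S.ldiv b₂ b₁ = S.rdiv c₂ c₁ := by rw [hb, S.ldiv_mul]
    obtain ⟨n, hn⟩ := hEn.1.2.2.1 b₂ hb₂ b₁ hb₁
    have he : S.rdiv c₂ c₁ = S.e :=
      hs.eq_e_of_mem_periodicPts (hd ▸ hn) (hOs.2.2.2 c₂ hc₂ c₁ hc₁)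
    have hc : c₂ = c₁ := by rw [← S.rdiv_mul c₁ c₂, he, S.one_mul]
    rw [he, S.mul_one] at hb
    subst hb hc
    rfl
  · intro q
    obtain ⟨b, hb, c, hc, h⟩ := hdecomp q
    exact ⟨(⟨b, hb⟩, ⟨c, hc⟩), h⟩
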